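/- Let n ≥ 1 and suppose (A,b) satisfies Setting B with constant δ ∈ (n/(n+π²),1]. Define γ := tr A/(|A|² + |b|²), Ã := γA, b̃ := γb, and κ := (δ − n/(n+π²))·(n+π²)/π². Then κ ∈ (0,1], and for every continuously differentiable ℤⁿ-periodic vector field w : ℝⁿ → ℝⁿ with ∫_Y w = 0 there holds ∫_Y |Ã:Dw + b̃·w − ∇·w|² ≤ (1−κ) ∫_Y |Dw|², where Dw is the Jacobian matrix of w, ∇·w = tr(Dw) its divergence, and |Dw| the Frobenius norm. -/

import Mathlib

open MeasureTheory

noncomputable section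

/-- The unit cell `Y = (0,1)^n`. -/
def unitCell (n : ℕ) : Set (Fin n → ℝ) := Set.univ.pi fun _ => Set.Ioo (0 : ℝ) 1

/-- Frobenius norm squared of a matrix. -/
def frobSq {n : ℕ} (M : Matrix (Fin n) (Fin n) ℝ) : ℝ := ∑ i, ∑ j, (M i j) ^ 2

/-- Frobenius inner product of two matrices. -/
def frobInner {n : ℕ} (M N : Matrix (Fin n) (Fin n) ℝ) : ℝ := ∑ i, ∑ j, M i j * N i j

/-- Euclidean norm squared of a vector. -/
def euclSq {n : ℕ} (v : Fin n → ℝ) : ℝ := ∑ i, (v i) ^ 2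

/-- Euclidean dot product. -/
def dotc {n : ℕ} (v w : Fin n → ℝ) : ℝ := ∑ i, v i * w i

/-- `ℤⁿ`-periodicity of a function on `ℝⁿ`. -/
def IsPeriodic {n : ℕ} {α : Type*} (f : (Fin n → ℝ) → α) : Prop :=
  ∀ (x : Fin n → ℝ) (k : Fin n → ℤ), f (x + fun i => (k i : ℝ)) = f x

/-- Partial derivative in direction `i`. -/
def pd {n : ℕ} (f : (Fin n → ℝ) → ℝ) (i : Fin n) (x : Fin n → ℝ) : ℝ :=
  fderiv ℝ f x (Pi.single i 1)

/-- Gradient. -/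
def grad {n : ℕ} (f : (Fin n → ℝ) → ℝ) (x : Fin n → ℝ) : Fin n → ℝ := fun i => pd f i x

/-- Hessian matrix. -/
def hess {n : ℕ} (f : (Fin n → ℝ) → ℝ) (x : Fin n → ℝ) : Matrix (Fin n) (Fin n) ℝ :=
  Matrix.of fun i j => pd (pd f j) i x

/-- Laplacian. -/
def lap {n : ℕ} (f : (Fin n → ℝ) → ℝ) (x : Fin n → ℝ) : ℝ := ∑ i, pd (pd f i) i x

/-- Jacobian matrix of a vector field: `(jac w x) i j = ∂_j w_i (x)`. -/
def jac {n : ℕ} (w : (Fin n → ℝ) → Fin n → ℝ) (x : Fin n → ℝ) : Matrix (Fin n) (Fin n) ℝ :=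
  Matrix.of fun i j => pd (fun y => w y i) j x

/-- Divergence of a vector field. -/
def divg {n : ℕ} (w : (Fin n → ℝ) → Fin n → ℝ) (x : Fin n → ℝ) : ℝ :=
  ∑ i, pd (fun y => w y i) i x

/-- Setting B: symmetric-valued, measurable, `ℤⁿ`-periodic, essentially bounded coefficients,
uniform ellipticity, and the Cordes-type condition with constant `δ ∈ (n/(n+π²), 1]`. -/
structure SettingB {n : ℕ} (A : (Fin n → ℝ) → Matrix (Fin n) (Fin n) ℝ)
    (b : (Fin n → ℝ) → Fin n → ℝ) (lam Lam δ : ℝ) : Prop where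
  symm : ∀ x, (A x).IsSymm
  measA : ∀ i j, Measurable fun x => A x i j
  measb : ∀ i, Measurable fun x => b x i
  perA : IsPeriodic A
  perb : IsPeriodic b
  bddA : ∃ C : ℝ, ∀ᵐ x ∂(volume : Measure (Fin n → ℝ)), frobSq (A x) ≤ C
  bddb : ∃ C : ℝ, ∀ᵐ x ∂(volume : Measure (Fin n → ℝ)), euclSq (b x) ≤ C
  lam_pos : 0 < lam
  lam_le_Lam : lam ≤ Lam
  ellip : ∀ᵐ x ∂(volume : Measure (Fin n → ℝ)), ∀ ξ : Fin n → ℝ,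
    lam * euclSq ξ ≤ dotc ξ (Matrix.mulVec (A x) ξ) ∧
      dotc ξ (Matrix.mulVec (A x) ξ) ≤ Lam * euclSq ξ
  delta_mem : δ ∈ Set.Ioc ((n : ℝ) / ((n : ℝ) + Real.pi ^ 2)) 1
  cordes : ∀ᵐ x ∂(volume : Measure (Fin n → ℝ)),
    (frobSq (A x) + euclSq (b x)) / (Matrix.trace (A x)) ^ 2 ≤ 1 / ((n : ℝ) - 1 + δ)

/-- The renormalization function `γ = tr A / (|A|² + |b|²)`. -/
def gam {n : ℕ} (A : (Fin n → ℝ) → Matrix (Fin n) (Fin n) ℝ)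
    (b : (Fin n → ℝ) → Fin n → ℝ) (x : Fin n → ℝ) : ℝ :=
  Matrix.trace (A x) / (frobSq (A x) + euclSq (b x))

/-- The constant `κ = (δ − n/(n+π²))·(n+π²)/π²`. -/
def kappa (n : ℕ) (δ : ℝ) : ℝ :=
  (δ - (n : ℝ) / ((n : ℝ) + Real.pi ^ 2)) * (((n : ℝ) + Real.pi ^ 2) / Real.pi ^ 2)

/-- The invariant measure: measurable, `ℤⁿ`-periodic, square-integrable over `Y`,
with unit mass over `Y`, solving the stationary FPK equation in the very weak sense. -/
def IsInvariantMeasure {n : ℕ} (A : (Fin n → ℝ) → Matrix (Fin n) (Fin n) ℝ)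
    (b : (Fin n → ℝ) → Fin n → ℝ) (r : (Fin n → ℝ) → ℝ) : Prop :=
  Measurable r ∧ IsPeriodic r ∧
    IntegrableOn (fun x => (r x) ^ 2) (unitCell n) ∧
    (∫ x in unitCell n, r x) = 1 ∧
    ∀ φ : (Fin n → ℝ) → ℝ, ContDiff ℝ 2 φ → IsPeriodic φ →
      (∫ x in unitCell n,
        r x * (frobInner (A x) (hess φ x) + dotc (b x) (grad φ x))) = 0

/-- The bilinear form `B₂`. -/
def B2 {n : ℕ} (A : (Fin n → ℝ) → Matrix (Fin n) (Fin n) ℝ)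
    (b : (Fin n → ℝ) → Fin n → ℝ) (v w : (Fin n → ℝ) → Fin n → ℝ) : ℝ :=
  (∫ x in unitCell n,
    divg v x * (frobInner (gam A b x • A x) (jac w x) + dotc (gam A b x • b x) (w x)))
  + (1 / 2) * ∫ x in unitCell n,
      frobInner (jac v x - (jac v x).transpose) (jac w x - (jac w x).transpose)

/-!
The renormalization by `γ` turns the Cordes condition into the pointwise bound
`|γA - I|² + |γb|² = n - (tr A)² / (|A|² + |b|²) ≤ 1 - δ`, so Cauchy-Schwarz bounds the integrand
by `(1 - δ) (|Dw|² + |w|²)`. The zero-order term is absorbed by a Poincaré inequality on the torus: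
a periodic `f` of zero mean satisfies `-f x = ∫_Y (f (x + u - c) - f x) du` with `c` the centre of
`Y`, and translation by `h` costs at most `|h| ‖∇f‖` in `L²`, so that
`∫_Y f² ≤ ∫_Y |u - c|² du ∫_Y |∇f|² = n / 12 ∫_Y |∇f|²`. Since `π² < 12`, this suffices for `κ`.
-/

section Integration

theorem integrableOn_of_continuous_of_isBounded {X E : Type*} [MetricSpace X] [ProperSpace X]
    [MeasurableSpace X] [OpensMeasurableSpace X] [NormedAddCommGroup E]
    {μ : Measure X} [IsFiniteMeasureOnCompacts μ] {g : X → E} {s : Set X}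
    (hg : Continuous g) (hs : Bornology.IsBounded s) : IntegrableOn g s μ :=
  (hg.continuousOn.integrableOn_compact hs.isCompact_closure).mono_set subset_closure

theorem integrable_prod_restrict_of_continuous_of_isBounded {X Y E : Type*} [MetricSpace X]
    [ProperSpace X] [MeasurableSpace X] [OpensMeasurableSpace X] [MetricSpace Y] [ProperSpace Y]
    [MeasurableSpace Y] [OpensMeasurableSpace Y] [NormedAddCommGroup E] {μ : Measure X}
    {ν : Measure Y} [IsFiniteMeasureOnCompacts μ] [IsFiniteMeasureOnCompacts ν]
    {g : X × Y → E} {s : Set X} {t : Set Y} (hg : Continuous g) (hs : Bornology.IsBounded s)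
    (ht : Bornology.IsBounded t) : Integrable g ((μ.restrict s).prod (ν.restrict t)) := by
  rw [Measure.prod_restrict]
  exact integrableOn_of_continuous_of_isBounded hg (hs.prod ht)

theorem sq_integral_le_integral_sq {α : Type*} [MeasurableSpace α] {μ : Measure α}
    [IsProbabilityMeasure μ] {g : α → ℝ} (hg : Integrable g μ)
    (hg_sq : Integrable (fun x => g x ^ 2) μ) : (∫ x, g x ∂μ) ^ 2 ≤ ∫ x, g x ^ 2 ∂μ :=
  even_two.convexOn_pow.map_integral_le (continuous_pow 2).continuousOn isClosed_univ
    (by simp) hg hg_sq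

theorem sub_eq_setIntegral_fderiv {E F : Type*} [NormedAddCommGroup E] [NormedSpace ℝ E]
    [NormedAddCommGroup F] [NormedSpace ℝ F] [CompleteSpace F] {f : E → F}
    (hf : ContDiff ℝ 1 f) (x h : E) :
    f (x + h) - f x = ∫ s in Set.Ioo (0 : ℝ) 1, fderiv ℝ f (x + s • h) h := by
  have hcont : Continuous fun s : ℝ => fderiv ℝ f (x + s • h) h :=
    ((hf.continuous_fderiv one_ne_zero).comp (by fun_prop)).clm_apply continuous_const
  have hderiv (s : ℝ) :
      HasDerivAt (fun s : ℝ => f (x + s • h)) (fderiv ℝ f (x + s • h) h) s := by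
    have hline : HasDerivAt (fun s : ℝ => x + s • h) h s := by
      simpa using ((hasDerivAt_id s).smul_const h).const_add x
    exact (hf.differentiable one_ne_zero _).hasFDerivAt.comp_hasDerivAt s hline
  rw [← integral_Ioc_eq_integral_Ioo, ← intervalIntegral.integral_of_le zero_le_one,
    intervalIntegral.integral_eq_sub_of_hasDerivAt (fun s _ => hderiv s)
      (hcont.intervalIntegrable _ _)]
  simp

instance isProbabilityMeasure_restrict_Ioo :
    IsProbabilityMeasure ((volume : Measure ℝ).restrict (Set.Ioo 0 1)) :=
  ⟨by simp⟩

end Integration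

section UnitCell

variable {n : ℕ}

theorem isBounded_unitCell : Bornology.IsBounded (unitCell n) :=
  Bornology.IsBounded.pi fun _ => Metric.isBounded_Ioo 0 1

theorem restrict_unitCell :
    (volume : Measure (Fin n → ℝ)).restrict (unitCell n)
      = Measure.pi fun _ => (volume : Measure ℝ).restrict (Set.Ioo 0 1) := by
  rw [unitCell, volume_pi, Measure.restrict_pi_pi]

instance isProbabilityMeasure_restrict_unitCell :
    IsProbabilityMeasure ((volume : Measure (Fin n → ℝ)).restrict (unitCell n)) := by
  rw [restrict_unitCell]
  infer_instance

theorem integrableOn_unitCell {g : (Fin n → ℝ) → ℝ} (hg : Continuous g) :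
    IntegrableOn g (unitCell n) :=
  integrableOn_of_continuous_of_isBounded hg isBounded_unitCell

theorem unitCell_ae_eq_fundamentalDomain :
    unitCell n =ᵐ[volume] ZSpan.fundamentalDomain (Pi.basisFun ℝ (Fin n)) := by
  rw [ZSpan.fundamentalDomain_pi_basisFun]
  exact Measure.univ_pi_Ioo_ae_eq_Icc.trans Measure.univ_pi_Ico_ae_eq_Icc.symm

theorem integral_sq_coord_sub_half (i : Fin n) :
    ∫ u in unitCell n, (u i - 1 / 2) ^ 2 = (1 / 12 : ℝ) := by
  rw [restrict_unitCell,
    integral_comp_eval (μ := fun _ : Fin n => (volume : Measure ℝ).restrict (Set.Ioo 0 1))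
      (i := i) (f := fun t : ℝ => (t - 1 / 2) ^ 2)
      (Continuous.aestronglyMeasurable (by fun_prop)),
    ← integral_Ioc_eq_integral_Ioo, ← intervalIntegral.integral_of_le zero_le_one,
    intervalIntegral.integral_comp_sub_right (fun t : ℝ => t ^ 2), integral_pow]
  norm_num

theorem integral_euclSq_sub_half :
    ∫ u in unitCell n, euclSq (u - fun _ => (1 / 2 : ℝ)) = n / 12 := by
  simp only [euclSq, Pi.sub_apply]
  rw [integral_finsetSum _ fun i _ => integrableOn_unitCell (by fun_prop)]
  simp only [integral_sq_coord_sub_half, Finset.sum_const, Finset.card_univ, Fintype.card_fin,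
    nsmul_eq_mul, mul_one_div]

end UnitCell

namespace IsPeriodic

variable {n : ℕ} {α β : Type*}

theorem comp_left {f : (Fin n → ℝ) → α} (hf : IsPeriodic f) (g : α → β) :
    IsPeriodic fun x => g (f x) :=
  fun x k => congrArg g (hf x k)

theorem grad {f : (Fin n → ℝ) → ℝ} (hf : IsPeriodic f) : IsPeriodic (grad f) := by
  intro x k
  have htranslate : (fun y => f (y + fun i => (k i : ℝ))) = f := funext fun y => hf y k
  funext i
  unfold _root_.grad pd
  rw [← fderiv_comp_add_right, htranslate]

theorem apply_vadd_of_mem_span {f : (Fin n → ℝ) → α} (hf : IsPeriodic f)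
    (v : (Submodule.span ℤ (Set.range (Pi.basisFun ℝ (Fin n)))).toAddSubgroup)
    (x : Fin n → ℝ) : f (v +ᵥ x) = f x := by
  obtain ⟨k, hk⟩ := (Submodule.mem_span_range_iff_exists_fun ℤ).mp v.2
  have hv : (v : Fin n → ℝ) = fun i => (k i : ℝ) := by
    rw [← hk]
    ext i
    simp [Finset.sum_apply, Pi.single_apply]
  rw [AddSubgroup.vadd_def, vadd_eq_add, add_comm, hv]
  exact hf x k

open scoped Pointwise in
theorem setIntegral_comp_add {E : Type*} [NormedAddCommGroup E] [NormedSpace ℝ E]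
    {g : (Fin n → ℝ) → E} (hg : IsPeriodic g) (a : Fin n → ℝ) :
    ∫ x in unitCell n, g (x + a) = ∫ x in unitCell n, g x := by
  set D := ZSpan.fundamentalDomain (Pi.basisFun ℝ (Fin n))
  have hD := ZSpan.isAddFundamentalDomain' (Pi.basisFun ℝ (Fin n)) volume
  have : Countable (Submodule.span ℤ (Set.range (Pi.basisFun ℝ (Fin n)))).toAddSubgroup :=
    inferInstanceAs (Countable (Submodule.span ℤ (Set.range (Pi.basisFun ℝ (Fin n)))))
  calc ∫ x in unitCell n, g (x + a) = ∫ x in D, g (a +ᵥ x) := by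
        simp only [setIntegral_congr_set unitCell_ae_eq_fundamentalDomain, vadd_eq_add,
          add_comm a, D]
    _ = ∫ x in a +ᵥ D, g x :=
        ((measurePreserving_vadd a volume).setIntegral_image_emb
          (measurableEmbedding_const_vadd a) g D).symm
    _ = ∫ x in D, g x := (hD.vadd_of_comm a).setIntegral_eq hD hg.apply_vadd_of_mem_span
    _ = ∫ x in unitCell n, g x :=
        (setIntegral_congr_set unitCell_ae_eq_fundamentalDomain).symm

end IsPeriodic

section Poincare

variable {n : ℕ} {f : (Fin n → ℝ) → ℝ}

@[fun_prop]
theorem continuous_euclSq : Continuous (euclSq : (Fin n → ℝ) → ℝ) :=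
  continuous_finsetSum _ fun i _ => (continuous_apply i).pow 2

theorem sq_dotc_le (v w : Fin n → ℝ) : dotc v w ^ 2 ≤ euclSq v * euclSq w :=
  Finset.sum_mul_sq_le_sq_mul_sq _ _ _

theorem fderiv_apply_eq_dotc_grad (f : (Fin n → ℝ) → ℝ) (x h : Fin n → ℝ) :
    fderiv ℝ f x h = dotc h (grad f x) := by
  conv_lhs => rw [pi_eq_sum_univ' h]
  simp [dotc, grad, pd, map_sum]

theorem continuous_grad (hf : ContDiff ℝ 1 f) : Continuous (grad f) :=
  continuous_pi fun _ => (hf.continuous_fderiv one_ne_zero).clm_apply continuous_const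

theorem sq_sub_le_setIntegral_euclSq_grad (hf : ContDiff ℝ 1 f) (x h : Fin n → ℝ) :
    (f (x + h) - f x) ^ 2
      ≤ ∫ s in Set.Ioo (0 : ℝ) 1, euclSq h * euclSq (grad f (x + s • h)) := by
  have hgrad := continuous_grad hf
  have hbdd := Metric.isBounded_Ioo (0 : ℝ) 1
  have hderiv : Continuous fun s : ℝ => fderiv ℝ f (x + s • h) h :=
    ((hf.continuous_fderiv one_ne_zero).comp (by fun_prop)).clm_apply continuous_const
  have hderiv_sq := integrableOn_of_continuous_of_isBounded (μ := volume) (hderiv.pow 2) hbdd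
  calc (f (x + h) - f x) ^ 2 = (∫ s in Set.Ioo (0 : ℝ) 1, fderiv ℝ f (x + s • h) h) ^ 2 := by
        rw [sub_eq_setIntegral_fderiv hf]
    _ ≤ ∫ s in Set.Ioo (0 : ℝ) 1, fderiv ℝ f (x + s • h) h ^ 2 :=
        sq_integral_le_integral_sq (integrableOn_of_continuous_of_isBounded hderiv hbdd)
          hderiv_sq
    _ ≤ ∫ s in Set.Ioo (0 : ℝ) 1, euclSq h * euclSq (grad f (x + s • h)) := by
        refine integral_mono hderiv_sq
          (integrableOn_of_continuous_of_isBounded (by fun_prop) hbdd) fun s => ?_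
        simp only [fderiv_apply_eq_dotc_grad]
        exact sq_dotc_le _ _

theorem integral_sq_translate_sub_le (hf : ContDiff ℝ 1 f) (hper : IsPeriodic f)
    (h : Fin n → ℝ) :
    ∫ x in unitCell n, (f (x + h) - f x) ^ 2
      ≤ euclSq h * ∫ x in unitCell n, euclSq (grad f x) := by
  have hfc := hf.continuous
  have hgrad := continuous_grad hf
  have hint : Integrable
      (Function.uncurry fun (x : Fin n → ℝ) (s : ℝ) => euclSq h * euclSq (grad f (x + s • h)))
      ((volume.restrict (unitCell n)).prod (volume.restrict (Set.Ioo 0 1))) :=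
    integrable_prod_restrict_of_continuous_of_isBounded (by fun_prop) isBounded_unitCell
      (Metric.isBounded_Ioo 0 1)
  calc ∫ x in unitCell n, (f (x + h) - f x) ^ 2
      ≤ ∫ x in unitCell n, ∫ s in Set.Ioo (0 : ℝ) 1, euclSq h * euclSq (grad f (x + s • h)) :=
        integral_mono (integrableOn_unitCell (by fun_prop)) hint.integral_prod_left
          fun x => sq_sub_le_setIntegral_euclSq_grad hf x h
    _ = ∫ s in Set.Ioo (0 : ℝ) 1, ∫ x in unitCell n, euclSq h * euclSq (grad f (x + s • h)) :=
        integral_integral_swap hint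
    _ = ∫ _ in Set.Ioo (0 : ℝ) 1, euclSq h * ∫ x in unitCell n, euclSq (grad f x) := by
        simp only [integral_const_mul,
          fun s : ℝ => (hper.grad.comp_left euclSq).setIntegral_comp_add (s • h)]
    _ = euclSq h * ∫ x in unitCell n, euclSq (grad f x) := by simp

theorem sq_le_integral_sq_translate_sub (hf : Continuous f) (hper : IsPeriodic f)
    (hmean : ∫ x in unitCell n, f x = 0) (x c : Fin n → ℝ) :
    f x ^ 2 ≤ ∫ u in unitCell n, (f (x + (u - c)) - f x) ^ 2 := by
  have hmean_sub : ∫ u in unitCell n, (f (x + (u - c)) - f x) = -f x := by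
    have hshift (u : Fin n → ℝ) : x + (u - c) = u + (x - c) := by abel
    rw [integral_sub (integrableOn_unitCell (by fun_prop)) (integrable_const _)]
    simp [hshift, hper.setIntegral_comp_add, hmean]
  rw [← neg_sq, ← hmean_sub]
  exact sq_integral_le_integral_sq (integrableOn_unitCell (by fun_prop))
    (integrableOn_unitCell (by fun_prop))

theorem integral_sq_le_integral_euclSq_grad (hf : ContDiff ℝ 1 f) (hper : IsPeriodic f)
    (hmean : ∫ x in unitCell n, f x = 0) :
    ∫ x in unitCell n, f x ^ 2 ≤ n / 12 * ∫ x in unitCell n, euclSq (grad f x) := by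
  have hfc := hf.continuous
  let c : Fin n → ℝ := fun _ => 1 / 2
  have hint : Integrable
      (Function.uncurry fun x u : Fin n → ℝ => (f (x + (u - c)) - f x) ^ 2)
      ((volume.restrict (unitCell n)).prod (volume.restrict (unitCell n))) :=
    integrable_prod_restrict_of_continuous_of_isBounded (by fun_prop) isBounded_unitCell
      isBounded_unitCell
  calc ∫ x in unitCell n, f x ^ 2
      ≤ ∫ x in unitCell n, ∫ u in unitCell n, (f (x + (u - c)) - f x) ^ 2 :=
        integral_mono (integrableOn_unitCell (by fun_prop)) hint.integral_prod_left
          fun x => sq_le_integral_sq_translate_sub hfc hper hmean x c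
    _ = ∫ u in unitCell n, ∫ x in unitCell n, (f (x + (u - c)) - f x) ^ 2 :=
        integral_integral_swap hint
    _ ≤ ∫ u in unitCell n, euclSq (u - c) * ∫ x in unitCell n, euclSq (grad f x) :=
        integral_mono hint.integral_prod_right (integrableOn_unitCell (by fun_prop))
          fun u => integral_sq_translate_sub_le hf hper (u - c)
    _ = n / 12 * ∫ x in unitCell n, euclSq (grad f x) := by
        rw [integral_mul_const, integral_euclSq_sub_half]

end Poincare

section VectorField

variable {n : ℕ} {w : (Fin n → ℝ) → Fin n → ℝ}

theorem frobSq_jac (w : (Fin n → ℝ) → Fin n → ℝ) (x : Fin n → ℝ) :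
    frobSq (jac w x) = ∑ i, euclSq (grad (fun y => w y i) x) := rfl

theorem continuous_jac (hw : ContDiff ℝ 1 w) : Continuous (jac w) :=
  continuous_pi fun i => continuous_grad (contDiff_pi.1 hw i)

@[fun_prop]
theorem continuous_frobSq : Continuous (frobSq : Matrix (Fin n) (Fin n) ℝ → ℝ) :=
  continuous_finsetSum _ fun i _ => continuous_finsetSum _ fun j _ =>
    (continuous_apply_apply i j).pow 2

theorem integral_euclSq_le_integral_frobSq_jac (hw : ContDiff ℝ 1 w) (hper : IsPeriodic w)
    (hmean : ∫ x in unitCell n, w x = 0) :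
    ∫ x in unitCell n, euclSq (w x) ≤ n / 12 * ∫ x in unitCell n, frobSq (jac w x) := by
  have hwc := hw.continuous
  have hgrad (i : Fin n) := continuous_grad (contDiff_pi.1 hw i)
  have hmean_coord (i : Fin n) : ∫ x in unitCell n, w x i = 0 := by
    rw [← eval_integral fun i => integrableOn_unitCell (by fun_prop), hmean, Pi.zero_apply]
  simp only [frobSq_jac, euclSq.eq_1 (w _)]
  rw [integral_finsetSum _ fun i _ => integrableOn_unitCell (by fun_prop),
    integral_finsetSum _ fun i _ => integrableOn_unitCell (by fun_prop), Finset.mul_sum]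
  exact Finset.sum_le_sum fun i _ => integral_sq_le_integral_euclSq_grad (contDiff_pi.1 hw i)
    (hper.comp_left fun v => v i) (hmean_coord i)

end VectorField

section Cordes

variable {n : ℕ}

theorem frobSq_nonneg (M : Matrix (Fin n) (Fin n) ℝ) : 0 ≤ frobSq M :=
  Finset.sum_nonneg fun _ _ => Finset.sum_nonneg fun _ _ => sq_nonneg _

theorem euclSq_nonneg (v : Fin n → ℝ) : 0 ≤ euclSq v :=
  Finset.sum_nonneg fun _ _ => sq_nonneg _

theorem euclSq_smul (c : ℝ) (v : Fin n → ℝ) : euclSq (c • v) = c ^ 2 * euclSq v := by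
  simp [euclSq, mul_pow, Finset.mul_sum]

theorem frobInner_one_left (M : Matrix (Fin n) (Fin n) ℝ) : frobInner 1 M = M.trace := by
  simp [frobInner, Matrix.one_apply, Matrix.trace]

theorem frobInner_sub_left (M N P : Matrix (Fin n) (Fin n) ℝ) :
    frobInner (M - N) P = frobInner M P - frobInner N P := by
  simp [frobInner, sub_mul, Finset.sum_sub_distrib]

theorem frobSq_one : frobSq (1 : Matrix (Fin n) (Fin n) ℝ) = n := by
  simp [frobSq, Matrix.one_apply]

theorem frobSq_smul_sub (c : ℝ) (M N : Matrix (Fin n) (Fin n) ℝ) :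
    frobSq (c • M - N) = c ^ 2 * frobSq M - 2 * c * frobInner N M + frobSq N := by
  simp only [frobSq, frobInner, Finset.mul_sum, ← Finset.sum_sub_distrib,
    ← Finset.sum_add_distrib, Matrix.sub_apply, Matrix.smul_apply, smul_eq_mul]
  refine Finset.sum_congr rfl fun i _ => Finset.sum_congr rfl fun j _ => ?_
  ring

theorem sq_frobInner_add_dotc_le (M N : Matrix (Fin n) (Fin n) ℝ) (v w : Fin n → ℝ) :
    (frobInner M N + dotc v w) ^ 2 ≤ (frobSq M + euclSq v) * (frobSq N + euclSq w) := by
  simpa only [frobInner, dotc, frobSq, euclSq, Fintype.sum_sum_type, Fintype.sum_prod_type,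
    Sum.elim_inl, Sum.elim_inr, Function.uncurry] using
    Finset.sum_mul_sq_le_sq_mul_sq Finset.univ
      (Sum.elim (Function.uncurry M) v) (Sum.elim (Function.uncurry N) w)

theorem sq_trace_le (M : Matrix (Fin n) (Fin n) ℝ) : M.trace ^ 2 ≤ n * frobSq M := by
  simpa [frobInner_one_left, frobSq_one, dotc, euclSq] using sq_frobInner_add_dotc_le 1 M 0 0

theorem frobSq_pos_of_trace_ne_zero {M : Matrix (Fin n) (Fin n) ℝ} (htr : M.trace ≠ 0) :
    0 < frobSq M :=
  pos_of_mul_pos_right ((sq_pos_of_ne_zero htr).trans_le (sq_trace_le M)) n.cast_nonneg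

theorem trace_pos_of_le_dotc_mulVec (hn : 1 ≤ n) {M : Matrix (Fin n) (Fin n) ℝ} {lam : ℝ}
    (hlam : 0 < lam) (hM : ∀ ξ : Fin n → ℝ, lam * euclSq ξ ≤ dotc ξ (M.mulVec ξ)) :
    0 < M.trace := by
  have : Nonempty (Fin n) := ⟨⟨0, hn⟩⟩
  refine Finset.sum_pos (fun i _ => hlam.trans_le ?_) Finset.univ_nonempty
  simpa [euclSq, dotc, Pi.single_apply] using hM (Pi.single i 1)

theorem frobSq_renormalized_sub_one_add_euclSq {M : Matrix (Fin n) (Fin n) ℝ} {v : Fin n → ℝ}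
    (htr : M.trace ≠ 0) :
    frobSq ((M.trace / (frobSq M + euclSq v)) • M - 1)
        + euclSq ((M.trace / (frobSq M + euclSq v)) • v)
      = n - M.trace ^ 2 / (frobSq M + euclSq v) := by
  have hpos := add_pos_of_pos_of_nonneg (frobSq_pos_of_trace_ne_zero htr) (euclSq_nonneg v)
  rw [frobSq_smul_sub, euclSq_smul, frobInner_one_left, frobSq_one]
  field_simp
  ring

theorem frobSq_renormalized_sub_one_add_euclSq_le {M : Matrix (Fin n) (Fin n) ℝ}
    {v : Fin n → ℝ} {δ : ℝ} (htr : M.trace ≠ 0)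
    (hcordes : (frobSq M + euclSq v) / M.trace ^ 2 ≤ 1 / ((n : ℝ) - 1 + δ)) :
    frobSq ((M.trace / (frobSq M + euclSq v)) • M - 1)
        + euclSq ((M.trace / (frobSq M + euclSq v)) • v) ≤ 1 - δ := by
  have hpos := add_pos_of_pos_of_nonneg (frobSq_pos_of_trace_ne_zero htr) (euclSq_nonneg v)
  have hratio : (n : ℝ) - 1 + δ ≤ M.trace ^ 2 / (frobSq M + euclSq v) := by
    simpa only [one_div_one_div, one_div_div, div_one] using
      one_div_le_one_div_of_le (div_pos hpos (sq_pos_of_ne_zero htr)) hcordes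
  rw [frobSq_renormalized_sub_one_add_euclSq htr]
  linarith

theorem sq_renormalized_sub_trace_le {M : Matrix (Fin n) (Fin n) ℝ} {v : Fin n → ℝ} {δ : ℝ}
    (htr : M.trace ≠ 0)
    (hcordes : (frobSq M + euclSq v) / M.trace ^ 2 ≤ 1 / ((n : ℝ) - 1 + δ))
    (P : Matrix (Fin n) (Fin n) ℝ) (u : Fin n → ℝ) :
    (frobInner ((M.trace / (frobSq M + euclSq v)) • M) P
        + dotc ((M.trace / (frobSq M + euclSq v)) • v) u - P.trace) ^ 2
      ≤ (1 - δ) * (frobSq P + euclSq u) := by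
  rw [add_sub_right_comm, ← frobInner_one_left P, ← frobInner_sub_left]
  exact (sq_frobInner_add_dotc_le _ _ _ _).trans <|
    mul_le_mul_of_nonneg_right (frobSq_renormalized_sub_one_add_euclSq_le htr hcordes)
      (add_nonneg (frobSq_nonneg P) (euclSq_nonneg u))

end Cordes

section Kappa

variable {n : ℕ}

theorem kappa_mem_Ioc {δ : ℝ} (hδ : δ ∈ Set.Ioc ((n : ℝ) / ((n : ℝ) + Real.pi ^ 2)) 1) :
    kappa n δ ∈ Set.Ioc (0 : ℝ) 1 := by
  refine ⟨mul_pos (sub_pos.2 hδ.1) (by positivity), ?_⟩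
  calc kappa n δ ≤ (1 - (n : ℝ) / (n + Real.pi ^ 2)) * ((n + Real.pi ^ 2) / Real.pi ^ 2) :=
        mul_le_mul_of_nonneg_right (by linarith [hδ.2]) (by positivity)
    _ = 1 := by field_simp; ring

theorem one_sub_kappa (n : ℕ) (δ : ℝ) :
    1 - kappa n δ = (1 - δ) * (1 + n / Real.pi ^ 2) := by
  unfold kappa
  field_simp
  ring

theorem one_sub_mul_le_one_sub_kappa {δ : ℝ} (hδ : δ ≤ 1) :
    (1 - δ) * (1 + n / 12) ≤ 1 - kappa n δ := by
  have hpi_sq : Real.pi ^ 2 ≤ 12 := by nlinarith [Real.pi_lt_d2, Real.pi_pos]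
  rw [one_sub_kappa]
  gcongr

end Kappa

section RenormalizedOperator

variable {n : ℕ} {A : (Fin n → ℝ) → Matrix (Fin n) (Fin n) ℝ} {b : (Fin n → ℝ) → Fin n → ℝ}

/-- The integrand `Ã:Dw + b̃·w − ∇·w`: the difference between the operator with the renormalized
coefficients `Ã = γA`, `b̃ = γb` and the divergence, applied to `w`. -/
def cordesDefect (A : (Fin n → ℝ) → Matrix (Fin n) (Fin n) ℝ) (b w : (Fin n → ℝ) → Fin n → ℝ)
    (x : Fin n → ℝ) : ℝ :=
  frobInner (gam A b x • A x) (jac w x) + dotc (gam A b x • b x) (w x) - divg w x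

theorem aemeasurable_cordesDefect {μ : Measure (Fin n → ℝ)}
    (hA : ∀ i j, AEMeasurable (fun x => A x i j) μ) (hb : ∀ i, AEMeasurable (fun x => b x i) μ)
    {w : (Fin n → ℝ) → Fin n → ℝ} (hw : ContDiff ℝ 1 w) :
    AEMeasurable (cordesDefect A b w) μ := by
  have hw_coord (i : Fin n) : AEMeasurable (fun x => w x i) μ :=
    ((continuous_apply i).comp hw.continuous).aemeasurable
  have hjac (i j : Fin n) : AEMeasurable (fun x => jac w x i j) μ :=
    ((continuous_apply_apply i j).comp (continuous_jac hw)).aemeasurable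
  have hdivg : AEMeasurable (divg w) μ :=
    Finset.aemeasurable_fun_sum _ fun i _ => hjac i i
  unfold cordesDefect gam frobInner dotc frobSq euclSq Matrix.trace
  simp only [Matrix.smul_apply, Pi.smul_apply, Matrix.diag_apply, smul_eq_mul]
  fun_prop

theorem stmt_5_general {δ : ℝ}
    (hA : ∀ i j, AEMeasurable (fun x => A x i j) (volume.restrict (unitCell n)))
    (hb : ∀ i, AEMeasurable (fun x => b x i) (volume.restrict (unitCell n)))
    (htr : ∀ᵐ x ∂volume.restrict (unitCell n), (A x).trace ≠ 0)
    (hcordes : ∀ᵐ x ∂volume.restrict (unitCell n),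
      (frobSq (A x) + euclSq (b x)) / (A x).trace ^ 2 ≤ 1 / ((n : ℝ) - 1 + δ))
    {w : (Fin n → ℝ) → Fin n → ℝ} (hw : ContDiff ℝ 1 w) (hper : IsPeriodic w)
    (hmean : ∫ x in unitCell n, w x = 0) :
    IntegrableOn (fun x => cordesDefect A b w x ^ 2) (unitCell n) ∧
      ∫ x in unitCell n, cordesDefect A b w x ^ 2
        ≤ (1 - δ) * (1 + n / 12) * ∫ x in unitCell n, frobSq (jac w x) := by
  have hpointwise : ∀ᵐ x ∂volume.restrict (unitCell n),
      cordesDefect A b w x ^ 2 ≤ (1 - δ) * (frobSq (jac w x) + euclSq (w x)) := by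
    filter_upwards [htr, hcordes] with x htr_x hcordes_x
    exact sq_renormalized_sub_trace_le htr_x hcordes_x (jac w x) (w x)
  have hδ : 0 ≤ 1 - δ := by
    obtain ⟨x, htr_x, hcordes_x⟩ := (htr.and hcordes).exists
    exact (add_nonneg (frobSq_nonneg _) (euclSq_nonneg _)).trans
      (frobSq_renormalized_sub_one_add_euclSq_le htr_x hcordes_x)
  have hw_sq : IntegrableOn (fun x => euclSq (w x)) (unitCell n) :=
    integrableOn_unitCell (continuous_euclSq.comp hw.continuous)
  have hjac_sq : IntegrableOn (fun x => frobSq (jac w x)) (unitCell n) :=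
    integrableOn_unitCell (continuous_frobSq.comp (continuous_jac hw))
  have hbound : IntegrableOn (fun x => (1 - δ) * (frobSq (jac w x) + euclSq (w x)))
      (unitCell n) :=
    (hjac_sq.add hw_sq).const_mul (1 - δ)
  have hdefect : IntegrableOn (fun x => cordesDefect A b w x ^ 2) (unitCell n) := by
    refine hbound.mono' ((aemeasurable_cordesDefect hA hb hw).pow_const 2).aestronglyMeasurable ?_
    simpa only [Real.norm_of_nonneg (sq_nonneg _)] using hpointwise
  refine ⟨hdefect, ?_⟩
  calc ∫ x in unitCell n, cordesDefect A b w x ^ 2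
      ≤ ∫ x in unitCell n, (1 - δ) * (frobSq (jac w x) + euclSq (w x)) :=
        integral_mono_ae hdefect hbound hpointwise
    _ = (1 - δ) * ((∫ x in unitCell n, frobSq (jac w x)) + ∫ x in unitCell n, euclSq (w x)) := by
        rw [integral_const_mul, integral_add hjac_sq hw_sq]
    _ ≤ (1 - δ) * ((∫ x in unitCell n, frobSq (jac w x))
          + n / 12 * ∫ x in unitCell n, frobSq (jac w x)) := by
        gcongr
        exact integral_euclSq_le_integral_frobSq_jac hw hper hmean
    _ = (1 - δ) * (1 + n / 12) * ∫ x in unitCell n, frobSq (jac w x) := by ring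

end RenormalizedOperator

/-- In Setting B, `κ ∈ (0,1]` and for every `C¹` periodic vector field
`w` with zero mean over `Y` there holds
`∫_Y |Ã:Dw + b̃·w − ∇·w|² ≤ (1−κ) ∫_Y |Dw|²`. -/
theorem stmt_5 {n : ℕ} (hn : 1 ≤ n)
    (A : (Fin n → ℝ) → Matrix (Fin n) (Fin n) ℝ) (b : (Fin n → ℝ) → Fin n → ℝ)
    (lam Lam δ : ℝ) (hAB : SettingB A b lam Lam δ) :
    kappa n δ ∈ Set.Ioc (0 : ℝ) 1 ∧
      ∀ w : (Fin n → ℝ) → Fin n → ℝ, ContDiff ℝ 1 w → IsPeriodic w →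
        (∫ x in unitCell n, w x) = 0 →
        (∫ x in unitCell n,
          (frobInner (gam A b x • A x) (jac w x) + dotc (gam A b x • b x) (w x)
            - divg w x) ^ 2)
          ≤ (1 - kappa n δ) * ∫ x in unitCell n, frobSq (jac w x) := by
  have htr : ∀ᵐ x ∂(volume : Measure (Fin n → ℝ)), (A x).trace ≠ 0 := by
    filter_upwards [hAB.ellip] with x hx
    exact (trace_pos_of_le_dotc_mulVec hn hAB.lam_pos fun ξ => (hx ξ).1).ne'
  refine ⟨kappa_mem_Ioc hAB.delta_mem, fun w hw hper hmean => ?_⟩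
  exact (stmt_5_general (fun i j => (hAB.measA i j).aemeasurable)
    (fun i => (hAB.measb i).aemeasurable) (ae_restrict_of_ae htr)
    (ae_restrict_of_ae hAB.cordes) hw hper hmean).2.trans <|
    mul_le_mul_of_nonneg_right (one_sub_mul_le_one_sub_kappa hAB.delta_mem.2)
      (integral_nonneg fun _ => frobSq_nonneg _)
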